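/- (Scenario bound used in the proof of Proposition 1.) Let μ be a probability measure on a measurable space Ω and Q : Ω → ℝ a measurable function. Fix ε ∈ (0,1) and β ∈ (0,1), and let N ∈ ℕ satisfy N ≥ ln(1/β) / ln(1/(1−ε)) and N ≥ 1. For (w₁,…,w_N) ∈ Ω^N let Q̂_N = max_{1 ≤ i ≤ N} Q(wᵢ). Then the N-fold product measure of the set {(w₁,…,w_N) ∈ Ω^N : μ{w ∈ Ω : Q(w) > Q̂_N} ≤ ε} is at least 1 − β. -/

import Mathlib

open MeasureTheory

/-!
Call a value `x` bad if `ε < μ {w | x < Q w}`. The bad values form a lower set, and `Q ≤ x` has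
probability at most `1 - ε` for each bad `x`; exhausting the bad values by countably many intervals
`Iic x` shows that a single sample has a bad value with probability at most `1 - ε`. If the maximum
of the samples is bad, then all of them are, which by independence has probability at most
`(1 - ε) ^ N ≤ β`.
-/

section LowerSet

variable {α : Type*} [LinearOrder α] [TopologicalSpace α] [OrderClosedTopology α]
  [SecondCountableTopology α]

theorem exists_countable_biUnion_Iic_eq_of_isLowerSet {s : Set α} (hs : IsLowerSet s) :
    ∃ t ⊆ s, t.Countable ∧ ⋃ x ∈ t, Set.Iic x = s := by
  have Iic_subset {t : Set α} (hts : t ⊆ s) : ⋃ x ∈ t, Set.Iic x ⊆ s :=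
    Set.iUnion₂_subset fun x hx => hs.Iic_subset (hts hx)
  by_cases hmax : ∃ m, IsGreatest s m
  · obtain ⟨m, hm, hle⟩ := hmax
    have hms : {m} ⊆ s := Set.singleton_subset_iff.2 hm
    refine ⟨{m}, hms, Set.countable_singleton m, (Iic_subset hms).antisymm fun x hx => ?_⟩
    exact Set.mem_biUnion rfl (hle hx)
  · obtain ⟨t, hts, htc, ht⟩ :=
      TopologicalSpace.isOpen_biUnion_countable s Set.Iio fun _ _ => isOpen_Iio
    refine ⟨t, hts, htc, (Iic_subset hts).antisymm fun x hx => ?_⟩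
    obtain ⟨y, hy, hxy⟩ : ∃ y ∈ s, x < y := by
      by_contra! hle
      exact hmax ⟨x, hx, hle⟩
    have hxt : x ∈ ⋃ z ∈ t, Set.Iio z := ht ▸ Set.mem_biUnion hy hxy
    exact Set.biUnion_mono subset_rfl (fun _ _ => Set.Iio_subset_Iic_self) hxt

theorem measure_le_of_isLowerSet_of_forall_measure_Iic_le [MeasurableSpace α] {ν : Measure α}
    {s : Set α} {c : ENNReal} (hs : IsLowerSet s) (hc : ∀ x ∈ s, ν (Set.Iic x) ≤ c) :
    ν s ≤ c := by
  obtain ⟨t, hts, htc, ht⟩ := exists_countable_biUnion_Iic_eq_of_isLowerSet hs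
  have hdir : DirectedOn (Function.onFun (· ⊆ ·) Set.Iic) t := fun x hx y hy =>
    ⟨max x y, max_rec' (· ∈ t) hx hy, Set.Iic_subset_Iic.2 (le_max_left x y),
      Set.Iic_subset_Iic.2 (le_max_right x y)⟩
  rw [← ht, measure_biUnion_eq_iSup htc hdir]
  exact iSup₂_le fun x hx => hc x (hts hx)

end LowerSet

section Tail

variable {α : Type*} [LinearOrder α] [TopologicalSpace α] [OrderClosedTopology α]
  [SecondCountableTopology α] [MeasurableSpace α] [OpensMeasurableSpace α]

theorem measure_setOf_lt_measure_Ioi_le (ν : Measure α) (ε : ENNReal) :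
    ν {x | ε < ν (Set.Ioi x)} ≤ ν Set.univ - ε := by
  refine measure_le_of_isLowerSet_of_forall_measure_Iic_le
    (fun x y hyx hx => hx.trans_le (measure_mono (Set.Ioi_subset_Ioi hyx))) fun x hx => ?_
  refine ENNReal.le_sub_of_add_le_right hx.ne_top ?_
  calc ν (Set.Iic x) + ε ≤ ν (Set.Iic x) + ν (Set.Iic x)ᶜ := by
        rw [Set.compl_Iic]
        gcongr
        exact hx.le
    _ = ν Set.univ := measure_add_measure_compl measurableSet_Iic

variable {Ω : Type*} [MeasurableSpace Ω] {μ : Measure Ω} {Q : Ω → α}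

theorem measure_setOf_lt_measure_setOf_lt_le (hQ : AEMeasurable Q μ) (ε : ENNReal) :
    μ {v | ε < μ {w | Q v < Q w}} ≤ μ Set.univ - ε := by
  have map_Ioi (x : α) : μ.map Q (Set.Ioi x) = μ {w | x < Q w} :=
    Measure.map_apply_of_aemeasurable hQ measurableSet_Ioi
  calc μ {v | ε < μ {w | Q v < Q w}}
      = μ (Q ⁻¹' {x | ε < μ.map Q (Set.Ioi x)}) := by simp only [map_Ioi, Set.preimage_ofPred_eq]
    _ ≤ μ.map Q {x | ε < μ.map Q (Set.Ioi x)} := Measure.le_map_apply hQ _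
    _ ≤ μ.map Q Set.univ - ε := measure_setOf_lt_measure_Ioi_le _ ε
    _ = μ Set.univ - ε := by
        rw [Measure.map_apply_of_aemeasurable hQ MeasurableSet.univ, Set.preimage_univ]

theorem measure_pi_setOf_lt_measure_setOf_forall_lt_le [SigmaFinite μ] {ι : Type*} [Fintype ι]
    (hQ : AEMeasurable Q μ) (ε : ENNReal) :
    (Measure.pi fun _ : ι => μ) {f | ε < μ {w | ∀ i, Q (f i) < Q w}}
      ≤ (μ Set.univ - ε) ^ Fintype.card ι :=
  calc (Measure.pi fun _ : ι => μ) {f | ε < μ {w | ∀ i, Q (f i) < Q w}}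
      ≤ (Measure.pi fun _ : ι => μ) (Set.univ.pi fun _ => {v | ε < μ {w | Q v < Q w}}) :=
        measure_mono fun f hf i _ => hf.trans_le (measure_mono fun _ hw => hw i)
    _ = μ {v | ε < μ {w | Q v < Q w}} ^ Fintype.card ι := by
        rw [Measure.pi_pi, Finset.prod_const, Finset.card_univ]
    _ ≤ (μ Set.univ - ε) ^ Fintype.card ι := by
        gcongr
        exact measure_setOf_lt_measure_setOf_lt_le hQ ε

end Tail

theorem pow_le_of_log_one_div_div_log_one_div_le {a b : ℝ} {n : ℕ} (ha₀ : 0 < a) (ha₁ : a < 1)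
    (hb : 0 < b) (hn : Real.log (1 / b) / Real.log (1 / a) ≤ n) : a ^ n ≤ b := by
  rw [one_div, one_div, Real.log_inv, Real.log_inv, neg_div_neg_eq, Real.log_div_log,
    Real.logb_le_iff_le_rpow_of_base_lt_one ha₀ ha₁ hb, Real.rpow_natCast] at hn
  exact hn

theorem scenario_good_set_ge_general {Ω α ι : Type*} [MeasurableSpace Ω] (μ : Measure Ω)
    [IsProbabilityMeasure μ] [ConditionallyCompleteLinearOrder α] [TopologicalSpace α]
    [OrderClosedTopology α] [SecondCountableTopology α] [MeasurableSpace α]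
    [OpensMeasurableSpace α] [Fintype ι] {Q : Ω → α} (hQ : AEMeasurable Q μ) {ε β : ℝ}
    (hε : ε ∈ Set.Ioo (0 : ℝ) 1) (hβ : 0 < β)
    (hcard : Real.log (1 / β) / Real.log (1 / (1 - ε)) ≤ Fintype.card ι) :
    ENNReal.ofReal (1 - β) ≤ (Measure.pi fun _ : ι => μ)
      {f | μ {w | (⨆ i, Q (f i)) < Q w} ≤ ENNReal.ofReal ε} := by
  set P := Measure.pi fun _ : ι => μ
  set good := {f : ι → Ω | μ {w | (⨆ i, Q (f i)) < Q w} ≤ ENNReal.ofReal ε}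
  have compl_good_subset :
      goodᶜ ⊆ {f | ENNReal.ofReal ε < μ {w | ∀ i, Q (f i) < Q w}} := fun f hf =>
    (not_le.1 (Set.notMem_ofPred_iff.1 hf)).trans_le <| measure_mono fun _ hw i =>
      (le_ciSup (Set.finite_range fun i => Q (f i)).bddAbove i).trans_lt hw
  have measure_compl_good_le : P goodᶜ ≤ ENNReal.ofReal β := calc
    P goodᶜ ≤ P {f | ENNReal.ofReal ε < μ {w | ∀ i, Q (f i) < Q w}} :=
        measure_mono compl_good_subset
    _ ≤ (μ Set.univ - ENNReal.ofReal ε) ^ Fintype.card ι :=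
        measure_pi_setOf_lt_measure_setOf_forall_lt_le hQ _
    _ = ENNReal.ofReal ((1 - ε) ^ Fintype.card ι) := by
        rw [measure_univ, ENNReal.ofReal_pow (sub_nonneg.2 hε.2.le),
          ENNReal.ofReal_sub _ hε.1.le, ENNReal.ofReal_one]
    _ ≤ ENNReal.ofReal β := ENNReal.ofReal_le_ofReal <|
        pow_le_of_log_one_div_div_log_one_div_le (sub_pos.2 hε.2) (sub_lt_self 1 hε.1)
          hβ hcard
  rw [ENNReal.ofReal_sub _ hβ.le, ENNReal.ofReal_one, tsub_le_iff_right]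
  calc 1 = P Set.univ := measure_univ.symm
    _ ≤ P good + P goodᶜ := measure_univ_le_add_compl good
    _ ≤ P good + ENNReal.ofReal β := by gcongr

/-- scenario bound used in the proof of Proposition 1: With
`ε, β ∈ (0,1)` and `N ≥ ln(1/β)/ln(1/(1-ε))`, `N ≥ 1`, the product-measure
probability that the empirical maximum `Q̂_N = ⨆ i, Q (f i)` satisfies
`μ{Q > Q̂_N} ≤ ε` is at least `1 - β`. -/
theorem scenario_good_set_ge {Ω : Type*} [MeasurableSpace Ω] (μ : Measure Ω)
    [IsProbabilityMeasure μ] (Q : Ω → ℝ) (hQ : Measurable Q)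
    (ε β : ℝ) (hε : ε ∈ Set.Ioo (0 : ℝ) 1) (hβ : β ∈ Set.Ioo (0 : ℝ) 1)
    (N : ℕ) (hNlog : (N : ℝ) ≥ Real.log (1 / β) / Real.log (1 / (1 - ε)))
    (hN : 1 ≤ N) :
    (Measure.pi fun _ : Fin N => μ)
        {f : Fin N → Ω | μ {w : Ω | Q w > ⨆ i, Q (f i)} ≤ ENNReal.ofReal ε}
      ≥ ENNReal.ofReal (1 - β) :=
  scenario_good_set_ge_general μ hQ.aemeasurable hε hβ.1 (by rwa [Fintype.card_fin])
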